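/- Let I_n^t, V_n^t be a solution of the hpdToda equation. Then for all t ∈ ℤ and all nonzero y ∈ ℂ, X_{t+1}(y)·R_t(y) = R_t(y)·X_t(y). -/

import Mathlib

/-!
With `S` the twisted cyclic shift and `T` its inverse, `R_t = diag(I^t) + S` and
`L_t = 1 + T diag(V^t)`. Conjugating by the shift moves the index of a periodic diagonal matrix by
one, so the two Toda equations are what is obtained by comparing the coefficients of `1` and `T` in the
refactorization `L_{t+1} R_{t+M} = R_t L_t` (`Ltoda_mul_Rtoda`). The theorem follows by
splitting `R_{t+M} ⋯ R_t` either at its right end, as `(R_{t+M} ⋯ R_{t+1}) R_t`, or at its left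
end, as `R_{t+M} (R_{t+M-1} ⋯ R_t)`.
-/

open Matrix Finset Filter

/-- The matrix `L_t(y)`: `(n,n)`-entry `1`, `(n+1,n)`-entry `V_n^t` for `n = 1,…,N-1`,
`(1,N)`-entry `V_N^t / y` (indices written 1-based; here realized 0-based on `Fin N`). -/
noncomputable def Ltoda (N : ℕ) (V : ℤ → ℤ → ℂ) (t : ℤ) (y : ℂ) :
    Matrix (Fin N) (Fin N) ℂ := fun i j =>
  (if i = j then 1 else 0) +
  (if (i : ℕ) = (j : ℕ) + 1 then V ((j : ℕ) + 1) t else 0) +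
  (if (i : ℕ) = 0 ∧ (j : ℕ) = N - 1 then V N t / y else 0)

/-- The matrix `R_t(y)`: `(n,n)`-entry `I_n^t`, `(n,n+1)`-entry `1` for `n = 1,…,N-1`,
`(N,1)`-entry `y`. -/
noncomputable def Rtoda (N : ℕ) (I : ℤ → ℤ → ℂ) (t : ℤ) (y : ℂ) :
    Matrix (Fin N) (Fin N) ℂ := fun i j =>
  (if i = j then I ((i : ℕ) + 1) t else 0) +
  (if (j : ℕ) = (i : ℕ) + 1 then 1 else 0) +
  (if (i : ℕ) = N - 1 ∧ (j : ℕ) = 0 then y else 0)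

/-- The shift matrix `S(y)`: `(n,n+1)`-entry `1` for `n = 1,…,N-1`, `(N,1)`-entry `y`. -/
def Stoda (N : ℕ) (y : ℂ) : Matrix (Fin N) (Fin N) ℂ := fun i j =>
  (if (j : ℕ) = (i : ℕ) + 1 then 1 else 0) +
  (if (i : ℕ) = N - 1 ∧ (j : ℕ) = 0 then y else 0)

/-- `Rprod N I t y k = R_{t+k-1}(y) ⋯ R_{t+1}(y) · R_t(y)`. -/
noncomputable def Rprod (N : ℕ) (I : ℤ → ℤ → ℂ) (t : ℤ) (y : ℂ) :
    ℕ → Matrix (Fin N) (Fin N) ℂ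
  | 0 => 1
  | k + 1 => Rtoda N I (t + k) y * Rprod N I t y k

/-- `X_t(y) = L_t(y) · R_{t+M-1}(y) ⋯ R_{t+1}(y) · R_t(y)`. -/
noncomputable def Xtoda (N M : ℕ) (I V : ℤ → ℤ → ℂ) (t : ℤ) (y : ℂ) :
    Matrix (Fin N) (Fin N) ℂ :=
  Ltoda N V t y * Rprod N I t y M

/-- `(I, V)` is a solution of the hungry periodic discrete Toda equation `Toda_{N,M}`. -/
def IsToda (N M : ℕ) (I V : ℤ → ℤ → ℂ) : Prop :=
  ∀ n t : ℤ,
    I n (t + M) = I n t + V n t - V (n - 1) (t + 1) ∧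
    V n (t + 1) * I n (t + M) = I (n + 1) t * V n t ∧
    I (n + N) t = I n t ∧ V (n + N) t = V n t

/-- The inverse of the shift `S(y)`: `(n+1,n)`-entry `1` and `(1,N)`-entry `1/y`, for `N = m + 1`.
The addition `j + 1` is cyclic in `Fin (m + 1)`. -/
noncomputable def Tshift (m : ℕ) (y : ℂ) : Matrix (Fin (m + 1)) (Fin (m + 1)) ℂ := fun i j =>
  if i = j + 1 then (if j = Fin.last m then y else 1)⁻¹ else 0

/-- The diagonal matrix with entries `a_1, …, a_N`. -/
def seqDiag (N : ℕ) (a : ℤ → ℂ) : Matrix (Fin N) (Fin N) ℂ :=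
  diagonal fun i => a ((i : ℕ) + 1)

lemma fin_eq_add_one_iff {m : ℕ} (i j : Fin (m + 1)) :
    i = j + 1 ↔ (i : ℕ) = j + 1 ∨ ((i : ℕ) = 0 ∧ (j : ℕ) = m) := by
  rw [Fin.ext_iff, Fin.val_add_one]
  have := i.isLt
  split_ifs with h
  · have hj : (j : ℕ) = m := by rw [h, Fin.val_last]
    omega
  · have : (j : ℕ) ≠ m := fun e => h (Fin.ext e)
    omega

lemma Stoda_apply (m : ℕ) (y : ℂ) (i j : Fin (m + 1)) :
    Stoda (m + 1) y i j = if j = i + 1 then (if i = Fin.last m then y else 1) else 0 := by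
  have hj := j.isLt
  simp only [Stoda, fin_eq_add_one_iff, Nat.add_sub_cancel]
  simp only [Fin.ext_iff, Fin.val_last]
  split_ifs <;> first | omega | simp

lemma Stoda_mul_Tshift (m : ℕ) {y : ℂ} (hy : y ≠ 0) : Stoda (m + 1) y * Tshift m y = 1 := by
  ext i j
  simp only [Matrix.mul_apply, Stoda_apply, Tshift, ite_mul, zero_mul, Finset.sum_ite_eq',
    Finset.mem_univ, if_true, Matrix.one_apply, add_left_inj]
  split_ifs <;> simp_all

lemma Tshift_mul_Stoda (m : ℕ) {y : ℂ} (hy : y ≠ 0) : Tshift m y * Stoda (m + 1) y = 1 :=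
  mul_eq_one_comm.mp (Stoda_mul_Tshift m hy)

lemma seqDiag_mul_Tshift (m : ℕ) (y : ℂ) (a : ℤ → ℂ) (ha : ∀ n, a (n + (m + 1 : ℕ)) = a n) :
    seqDiag (m + 1) a * Tshift m y = Tshift m y * seqDiag (m + 1) fun n => a (n + 1) := by
  ext i j
  simp only [seqDiag, diagonal_mul, mul_diagonal, Tshift]
  by_cases h : i = j + 1
  · have key : a ((i : ℕ) + 1) = a ((j : ℕ) + 1 + 1) := by
      rcases (fin_eq_add_one_iff i j).mp h with h | ⟨h, h'⟩
      · rw [h]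
        push_cast
        rfl
      · rw [h, h', ← ha]
        congr 1
        push_cast
        ring
    rw [if_pos h, key, mul_comm]
  · simp [h]

lemma Rtoda_eq (N : ℕ) (I : ℤ → ℤ → ℂ) (t : ℤ) (y : ℂ) :
    Rtoda N I t y = seqDiag N (fun n => I n t) + Stoda N y := by
  ext i j
  simp [Rtoda, seqDiag, Stoda, diagonal_apply, add_assoc]

lemma Ltoda_eq (m : ℕ) (V : ℤ → ℤ → ℂ) (t : ℤ) {y : ℂ} :
    Ltoda (m + 1) V t y = 1 + Tshift m y * seqDiag (m + 1) (fun n => V n t) := by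
  ext i j
  have hi := i.isLt
  simp only [Ltoda, Matrix.add_apply, Matrix.one_apply, add_assoc, add_right_inj, seqDiag,
    mul_diagonal, Tshift, fin_eq_add_one_iff, Nat.add_sub_cancel]
  simp only [Fin.ext_iff, Fin.val_last]
  split_ifs <;> first | omega | simp_all [div_eq_inv_mul]

/-- The refactorization `L_{t+1} R_{t+M} = R_t L_t`, the matrix form of the Toda equations. -/
lemma Ltoda_mul_Rtoda (m M : ℕ) (I V : ℤ → ℤ → ℂ) (hsol : IsToda (m + 1) M I V) (t : ℤ)
    {y : ℂ} (hy : y ≠ 0) :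
    Ltoda (m + 1) V (t + 1) y * Rtoda (m + 1) I (t + M) y =
      Rtoda (m + 1) I t y * Ltoda (m + 1) V t y := by
  have hV : Tshift m y * seqDiag (m + 1) (fun n => V n (t + 1)) =
      seqDiag (m + 1) (fun n => V (n - 1) (t + 1)) * Tshift m y := by
    rw [seqDiag_mul_Tshift]
    · simp
    · intro n
      rw [add_sub_right_comm]
      exact (hsol _ _).2.2.2
  have hI := seqDiag_mul_Tshift m y (fun n => I n t) fun n => (hsol n t).2.2.1
  have hTS := Tshift_mul_Stoda m hy
  have hST := Stoda_mul_Tshift m hy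
  -- the coefficient of `1`
  have h1 : seqDiag (m + 1) (fun n => I n (t + M)) + seqDiag (m + 1) (fun n => V (n - 1) (t + 1)) =
      seqDiag (m + 1) (fun n => I n t) + seqDiag (m + 1) (fun n => V n t) := by
    simp only [seqDiag, diagonal_add]
    congr 1
    ext i
    rw [(hsol _ t).1]
    ring
  -- the coefficient of `T`
  have h2 : seqDiag (m + 1) (fun n => V n (t + 1)) * seqDiag (m + 1) (fun n => I n (t + M)) =
      seqDiag (m + 1) (fun n => I (n + 1) t) * seqDiag (m + 1) (fun n => V n t) := by
    simp only [seqDiag, diagonal_mul_diagonal]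
    congr 1
    ext i
    exact (hsol _ t).2.1
  rw [Rtoda_eq, Rtoda_eq, Ltoda_eq, Ltoda_eq]
  generalize seqDiag (m + 1) (fun n => V n (t + 1)) = V' at *
  generalize seqDiag (m + 1) (fun n => V (n - 1) (t + 1)) = W at *
  generalize seqDiag (m + 1) (fun n => I n (t + M)) = I' at *
  generalize seqDiag (m + 1) (fun n => I (n + 1) t) = J at *
  generalize seqDiag (m + 1) (fun n => I n t) = I₀ at *
  generalize seqDiag (m + 1) (fun n => V n t) = V₀ at *
  generalize Tshift m y = T at *
  generalize Stoda (m + 1) y = S at *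
  calc (1 + T * V') * (I' + S) = I' + S + T * (V' * I') + (T * V') * S := by noncomm_ring
    _ = (I' + W) + S + T * (J * V₀) := by
      rw [hV, mul_assoc W, hTS, h2, mul_one]; abel
    _ = I₀ + S + (I₀ * T) * V₀ + (S * T) * V₀ := by
      rw [h1, hI, hST, one_mul, mul_assoc]; abel
    _ = (I₀ + S) * (1 + T * V₀) := by noncomm_ring

lemma Rprod_succ_right (N : ℕ) (I : ℤ → ℤ → ℂ) (t : ℤ) (y : ℂ) (k : ℕ) :
    Rprod N I (t + 1) y k * Rtoda N I t y = Rprod N I t y (k + 1) := by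
  induction k with
  | zero => simp [Rprod]
  | succ k ih =>
    have : t + 1 + (k : ℤ) = t + ((k + 1 : ℕ) : ℤ) := by push_cast; ring
    rw [Rprod, mul_assoc, ih, this, ← Rprod]

/-- for a solution of hpdToda, `X_{t+1}(y) R_t(y) = R_t(y) X_t(y)`. -/
theorem stmt1 (N M : ℕ) (hN : 0 < N) (hM : 0 < M) (I V : ℤ → ℤ → ℂ)
    (hsol : IsToda N M I V) :
    ∀ (t : ℤ) (y : ℂ), y ≠ 0 →
      Xtoda N M I V (t + 1) y * Rtoda N I t y = Rtoda N I t y * Xtoda N M I V t y := by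
  intro t y hy
  obtain ⟨m, rfl⟩ : ∃ m, N = m + 1 := ⟨N - 1, by omega⟩
  rw [Xtoda, Xtoda, mul_assoc, Rprod_succ_right, Rprod, ← mul_assoc,
    Ltoda_mul_Rtoda m M I V hsol t hy, mul_assoc]
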